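/- For every natural number n, the function μ_n satisfies μ_n''(z) − 2(z + 4z/(1+2z²))·μ_n'(z) + 2n·μ_n(z) = 0 for all z ∈ ℂ with 1 + 2z² ≠ 0. -/

import Mathlib

/-- Even coefficients c_{2k}(n) of the generalized power series. -/
noncomputable def ceven (n k : ℕ) : ℂ :=
  if k = 0 then 1
  else if k = 1 then -(n : ℂ)
  else (-1) ^ k * 2 ^ k * (n : ℂ) * ((n : ℂ) - ((2 * (k : ℂ) - 1) ^ 2 + 1)) *
    (∏ j ∈ Finset.Icc 1 (k - 2), ((n : ℂ) - 2 * (1 + (j : ℂ)))) /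
      (Nat.factorial (2 * k) : ℂ)

/-- Odd coefficients: `codd n k` is c_{2k-1}(n), for k ≥ 1. -/
noncomputable def codd (n k : ℕ) : ℂ :=
  if k ≤ 1 then 1
  else (-1) ^ (k + 1) * 2 ^ (k - 1) * ((n : ℂ) - ((2 * ((k : ℂ) - 1)) ^ 2 + 1)) *
    (∏ j ∈ Finset.Icc 1 (k - 2), ((n : ℂ) - (2 * (1 + (j : ℂ)) - 1))) /
      (Nat.factorial (2 * k - 1) : ℂ)

/-- μₙ(z) = Σ_{k≥0} c_{2k}(n)·z^{2k}. -/
noncomputable def muF (n : ℕ) (z : ℂ) : ℂ := ∑' k : ℕ, ceven n k * z ^ (2 * k)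

/-- νₙ(z) = Σ_{k≥1} c_{2k-1}(n)·z^{2k-1}. -/
noncomputable def nuF (n : ℕ) (z : ℂ) : ℂ := ∑' k : ℕ, codd n (k + 1) * z ^ (2 * k + 1)

/-- βₙ = μₙ + νₙ. -/
noncomputable def betaF (n : ℕ) (z : ℂ) : ℂ := muF n z + nuF n z


lemma hasSum_cg {f g : ℕ → ℂ} {s t : ℂ} (h : HasSum g t) (hf : ∀ k, f k = g k) (hs : s = t) :
    HasSum f s := by
  rw [hs, funext hf]; exact h

lemma ceven_two_add (n m : ℕ) : ceven n (m+2) = (-1) ^ m * 2 ^ (m+2) * (n : ℂ) * ((n : ℂ) - ((2 * (m : ℂ) + 3) ^ 2 + 1)) *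
    (∏ j ∈ Finset.Icc 1 m, ((n : ℂ) - 2 * (1 + (j : ℂ)))) / (Nat.factorial (2 * m + 4) : ℂ) := by
  unfold ceven
  rw [if_neg (by omega), if_neg (by omega)]
  simp only [Nat.add_sub_cancel]
  have : 2 * (m+2) = 2 * m + 4 := by ring
  rw [this]
  push_cast
  ring

lemma ceven_rec (n k : ℕ) : (2*(k:ℂ)+4)*(2*k+3) * ceven n (k+2)
    + (2*(2*(k:ℂ)+2)*(2*k+1) - 10*(2*k+2) + 2*n) * ceven n (k+1) + (4*n - 8*k) * ceven n k = 0 := by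
  have h0 : ceven n 0 = 1 := by simp [ceven]
  have h1 : ceven n 1 = -(n:ℂ) := by simp [ceven]
  rcases k with _ | _ | m
  · rw [ceven_two_add, h0]
    simp only [Nat.zero_add]
    rw [h1]
    simp [Nat.factorial]
    ring
  · rw [ceven_two_add, show 0+1+1 = 0+2 from rfl, ceven_two_add]
    simp only [Nat.zero_add]
    rw [h1]
    simp [Nat.factorial]
    ring
  · rw [show m+1+1+2 = (m+2)+2 from rfl, show m+1+1+1 = (m+1)+2 from rfl, show m+1+1 = m+2 from rfl]
    rw [ceven_two_add, ceven_two_add, ceven_two_add]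
    rw [Finset.prod_Icc_succ_top (by omega), Finset.prod_Icc_succ_top (by omega)]
    rw [show 2*(m+2)+4 = (2*m+4)+1+1+1+1 by ring, show 2*(m+1)+4 = (2*m+4)+1+1 by ring]
    simp only [Nat.factorial_succ (2*m+4), Nat.factorial_succ (2*m+4+1), Nat.factorial_succ (2*m+4+1+1), Nat.factorial_succ (2*m+4+1+1+1)]
    generalize (∏ j ∈ Finset.Icc 1 m, ((n : ℂ) - 2 * (1 + (j : ℂ)))) = P
    have hF : ((2*m+4).factorial : ℂ) ≠ 0 := by exact_mod_cast Nat.factorial_ne_zero _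
    generalize ((2*m+4).factorial) = F at *
    have e1 : (2*(m:ℂ)+4+1) ≠ 0 := by norm_cast
    have e2 : (2*(m:ℂ)+4+1+1) ≠ 0 := by norm_cast
    have e3 : (2*(m:ℂ)+4+1+1+1) ≠ 0 := by norm_cast
    have e4 : (2*(m:ℂ)+4+1+1+1+1) ≠ 0 := by norm_cast
    push_cast
    field_simp
    ring

lemma ceven_bound (n : ℕ) : ∃ D E : ℝ, 0 ≤ D ∧ 0 ≤ E ∧ ∀ k, ‖ceven n k‖ ≤ D * E ^ k / (k.factorial : ℝ) := by
  have hP : ∀ m : ℕ, ‖∏ j ∈ Finset.Icc 1 m, ((n : ℂ) - 2 * (1 + (j : ℂ)))‖ ≤ ((n:ℝ)+2)^m * ((m+1).factorial : ℝ) := by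
    intro m
    induction m with
    | zero => simp
    | succ m ih =>
      rw [Finset.prod_Icc_succ_top (by omega), norm_mul, Nat.factorial_succ (m+1)]
      have : ‖(n : ℂ) - 2 * (1 + ((m+1 : ℕ) : ℂ))‖ ≤ ((n:ℝ)+2) * ((m+1+1 : ℕ) : ℝ) := by
        refine (norm_sub_le _ _).trans ?_
        have : (2 * (1 + ((m+1 : ℕ) : ℂ))) = ((2*(m+2) : ℕ) : ℂ) := by push_cast; ring
        rw [this, Complex.norm_natCast, Complex.norm_natCast]
        push_cast
        nlinarith [mul_nonneg (Nat.cast_nonneg (α := ℝ) n) (Nat.cast_nonneg (α := ℝ) m), Nat.cast_nonneg (α := ℝ) n]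
      calc _ ≤ (((n:ℝ)+2)^m * ((m+1).factorial : ℝ)) * (((n:ℝ)+2) * ((m+1+1 : ℕ) : ℝ)) := by gcongr
        _ = _ := by push_cast; ring
  have hk4 : ∀ m : ℕ, (m:ℝ)^2 ≤ 4^m := by
    intro m
    have : (m:ℝ) ≤ 2^m := by exact_mod_cast (Nat.lt_two_pow_self).le
    calc (m:ℝ)^2 ≤ (2^m)^2 := by gcongr
      _ = 4^m := by rw [← pow_mul, mul_comm, pow_mul]; norm_num
  refine ⟨(n:ℝ)*((n:ℝ)+26)+1, 8*((n:ℝ)+2), by positivity, by positivity, ?_⟩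
  intro k
  have hn : (0:ℝ) ≤ n := Nat.cast_nonneg _
  rcases k with _ | _ | m
  · simp [ceven]; positivity
  · simp [ceven]; nlinarith [mul_nonneg hn hn, mul_nonneg hn (mul_nonneg hn hn)]
  · rw [show m+1+1 = m+2 from rfl, ceven_two_add]
    rw [norm_div, Complex.norm_natCast]
    have hf : ((m+2).factorial : ℝ) * ((m+2).factorial : ℝ) ≤ ((2*m+4).factorial : ℝ) := by
      have := Nat.le_of_dvd (Nat.factorial_pos _) (Nat.factorial_mul_factorial_dvd_factorial_add (m+2) (m+2))
      rw [show m+2+(m+2) = 2*m+4 by ring] at this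
      exact_mod_cast this
    have hq : ‖(n : ℂ) - ((2 * (m : ℂ) + 3) ^ 2 + 1)‖ ≤ ((n:ℝ)+26) * 4^m := by
      refine (norm_sub_le _ _).trans ?_
      have : ((2 * (m : ℂ) + 3) ^ 2 + 1) = (((2*m+3)^2+1 : ℕ) : ℂ) := by push_cast; ring
      rw [this, Complex.norm_natCast, Complex.norm_natCast]
      push_cast
      have h1 : (1:ℝ) ≤ 4^m := one_le_pow₀ (by norm_num)
      nlinarith [hk4 m, sq_nonneg ((m:ℝ)-1), mul_nonneg hn (sub_nonneg.2 h1)]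
    have hfac : ((m+1).factorial : ℝ) ≤ ((m+2).factorial : ℝ) := by
      exact_mod_cast Nat.factorial_le (by omega)
    have hfp : (0:ℝ) < ((m+2).factorial : ℝ) := by exact_mod_cast Nat.factorial_pos _
    simp only [norm_mul, norm_pow, norm_neg, norm_one, one_pow, one_mul, Complex.norm_natCast, Complex.norm_ofNat]
    calc _ ≤ 2^(m+2) * (n:ℝ) * (((n:ℝ)+26) * 4^m) * (((n:ℝ)+2)^m * ((m+2).factorial : ℝ)) / (((m+2).factorial : ℝ) * ((m+2).factorial : ℝ)) := by
          gcongr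
          exact (hP m).trans (by gcongr)
      _ = ((n:ℝ)*((n:ℝ)+26)) * (2^(m+2) * 4^m * ((n:ℝ)+2)^m) / ((m+2).factorial : ℝ) := by
          field_simp
      _ ≤ ((n:ℝ)*((n:ℝ)+26)+1) * (8*((n:ℝ)+2))^(m+2) / ((m+2).factorial : ℝ) := by
          have : (8*((n:ℝ)+2))^(m+2) = 2^(m+2) * 4^(m+2) * ((n:ℝ)+2)^(m+2) := by
            rw [mul_pow, ← mul_pow (2:ℝ) 4]; norm_num
          rw [this]
          gcongr <;> first | linarith | norm_num

lemma pow_series_deriv (a : ℕ → ℂ) (e : ℕ → ℕ) (he : ∀ k, e k ≤ 2*k) (D E : ℝ) (hD : 0 ≤ D) (hE : 0 ≤ E)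
    (ha : ∀ k, ‖a k‖ ≤ D * E ^ k / (k.factorial : ℝ)) (z : ℂ) :
    Summable (fun k => a k * z ^ e k) ∧
    HasSum (fun k => a k * e k * z ^ (e k - 1)) (deriv (fun w => ∑' k, a k * w ^ e k) z) := by
  set R : ℝ := ‖z‖ + 1
  have hR : 1 ≤ R := by have := norm_nonneg z; simp only [R]; linarith
  have hu : Summable (fun k : ℕ => D * ((E * R^2)^k / (k.factorial : ℝ))) :=
    (Real.summable_pow_div_factorial _).mul_left D
  have hb : ∀ (k : ℕ) (w : ℂ), w ∈ Metric.ball (0:ℂ) R → ‖a k * w ^ e k‖ ≤ D * ((E * R^2)^k / (k.factorial : ℝ)) := by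
    intro k w hw
    have hw' : ‖w‖ ≤ R := by simpa using (mem_ball_zero_iff.1 hw).le
    rw [norm_mul, norm_pow]
    calc _ ≤ (D * E ^ k / (k.factorial : ℝ)) * R^(2*k) := by
          gcongr
          · exact ha k
          · exact (pow_le_pow_left₀ (norm_nonneg _) hw' _).trans (pow_le_pow_right₀ hR (he k))
      _ = _ := by rw [mul_pow, pow_mul]; ring
  have hz : z ∈ Metric.ball (0:ℂ) R := by simp [R]
  refine ⟨Summable.of_norm_bounded hu (fun k => hb k z hz), ?_⟩
  have := Complex.hasSum_deriv_of_summable_norm (F := fun k w => a k * w ^ e k) hu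
    (fun i => by fun_prop) Metric.isOpen_ball hb hz
  refine hasSum_cg this (fun k => ?_) rfl
  simp [mul_assoc]

theorem stmt8 (n : ℕ) (z : ℂ) (hz : 1 + 2 * z ^ 2 ≠ 0) :
    deriv (deriv (muF n)) z
      - 2 * (z + 4 * z / (1 + 2 * z ^ 2)) * deriv (muF n) z
      + 2 * (n : ℂ) * muF n z = 0 := by
  obtain ⟨D, E, hD, hE, hb⟩ := ceven_bound n
  have A := pow_series_deriv (ceven n) (fun k => 2*k) (fun k => le_rfl) D E hD hE hb
  have hmu : (fun w => ∑' k, ceven n k * w ^ (2*k)) = muF n := by ext w; rfl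
  simp only [hmu] at A
  have hb2 : ∀ k, ‖ceven n k * ((2*k : ℕ) : ℂ)‖ ≤ (2*D) * (2*E)^k / (k.factorial : ℝ) := by
    intro k
    have h2 : (k:ℝ) ≤ 2^k := by exact_mod_cast (Nat.lt_two_pow_self).le
    rw [norm_mul, Complex.norm_natCast]
    push_cast
    calc _ ≤ (D * E ^ k / (k.factorial : ℝ)) * (2 * 2^k) := by
          gcongr
          exact hb k
      _ = _ := by rw [mul_pow]; ring
  have B := pow_series_deriv (fun k => ceven n k * ((2*k : ℕ) : ℂ)) (fun k => 2*k-1) (fun k => by omega)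
    (2*D) (2*E) (by positivity) (by positivity) hb2 z
  have hmu' : (fun w => ∑' k, ceven n k * ((2*k : ℕ) : ℂ) * w ^ (2*k-1)) = deriv (muF n) := by
    ext w; exact (A w).2.tsum_eq
  simp only [hmu'] at B
  have S0 : HasSum (fun k => ceven n k * z ^ (2*k)) (muF n z) := (A z).1.hasSum
  have S1 := (A z).2
  have S2 := B.2
  generalize muF n z = f0 at *
  generalize deriv (deriv (muF n)) z = f2 at *
  generalize deriv (muF n) z = f1 at *
  have hs : HasSum (fun k : ℕ => (2*(k:ℂ)+2)*(2*k+1) * ceven n (k+1) * z^(2*k)) f2 := by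
    have := (hasSum_nat_add_iff' 1).2 S2
    simp only [Finset.sum_range_one] at this
    refine hasSum_cg this (fun k => ?_) ?_
    · rw [show 2*(k+1)-1-1 = 2*k by omega, show 2*(k+1)-1 = 2*k+1 by omega]
      push_cast; ring
    · simp
  have zS1 : HasSum (fun k : ℕ => 2*(k:ℂ) * ceven n k * z^(2*k)) (z*f1) := by
    refine hasSum_cg (S1.mul_left z) (fun k => ?_) rfl
    rcases k with _ | k
    · simp
    · rw [show 2*(k+1)-1 = 2*k+1 by omega]; push_cast; ring
  have zS2 : HasSum (fun k : ℕ => 2*(k:ℂ)*(2*k-1) * ceven n k * z^(2*k)) (z^2*f2) := by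
    refine hasSum_cg (S2.mul_left (z^2)) (fun k => ?_) rfl
    rcases k with _ | k
    · simp
    · rw [show 2*(k+1)-1-1 = 2*k by omega, show 2*(k+1)-1 = 2*k+1 by omega]; push_cast; ring
  have U : HasSum (fun k : ℕ => (4*n - 8*(k:ℂ)) * ceven n k * z^(2*k+2)) (z^2 * (4*n*f0 - 4*(z*f1))) := by
    refine hasSum_cg (((S0.mul_left (4*(n:ℂ))).sub (zS1.mul_left 4)).mul_left (z^2)) (fun k => ?_) rfl
    ring
  have T := ((hs.add (zS2.mul_left 2)).sub (zS1.mul_left 10)).add (S0.mul_left (2*(n:ℂ)))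
  have T' := ((hasSum_nat_add_iff' 1).2 T).add U
  have Z : ∀ s, HasSum (fun _ : ℕ => (0:ℂ)) s → s = 0 := fun s h => h.unique hasSum_zero
  have key := Z _ (by
    refine hasSum_cg T' (fun k => ?_) rfl
    have := ceven_rec n k
    rw [show 2*(k+1) = 2*k+2 by ring, show k+1+1 = k+2 from rfl]
    push_cast
    linear_combination (-z^(2*k+2)) * this)
  have h0 : ceven n 0 = 1 := by simp [ceven]
  have h1 : ceven n 1 = -(n:ℂ) := by simp [ceven]
  simp [h0, h1] at key
  field_simp
  linear_combination key
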